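/- In the precision-test setup, if α₂ < 0, α₂′ = α₃ > 0 and ε > 0, then for every x > 0 the local powers satisfy Π₂(x) = Π₃(x) < Π₁(x) < Π₄(x); if instead ε < 0, then Π₂(x) = Π₃(x) > Π₁(x) > Π₄(x). -/

import Mathlib

/-!
Integrating `2 f_{m+2}' = f_m - f_{m+2}` gives `F_m - F_{m+2} = 2 f_{m+2}` for the central
chi-square distribution, and Poisson mixing carries this over to
`G_{m,λ} - G_{m+2,λ} = 2 g_{m+2,λ}`. A local power is therefore `1 - G_{1,λ}` plus a combination of
`g_{3,λ}`, `g_{5,λ}` and `g_{7,λ}`. The coefficient of `g_{3,λ}` is the same for all four tests, and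
in each comparison with the likelihood ratio test what remains is a multiple of the single positive
quantity `ε² g_{7,λ} / 3 - g_{5,λ} / α₂`.
-/

/-- The chi-square density with `m` degrees of freedom:
`f_m(x) = x^(m/2-1) e^(-x/2) / (2^(m/2) Γ(m/2))` for `x > 0`, and `0` otherwise. -/
noncomputable def chisqPDF (m : ℕ) (x : ℝ) : ℝ :=
  if 0 < x then
    x ^ ((m : ℝ) / 2 - 1) * Real.exp (-x / 2) /
      (2 ^ ((m : ℝ) / 2) * Real.Gamma ((m : ℝ) / 2))
  else 0

/-- The noncentral chi-square density with `m` degrees of freedom and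
noncentrality parameter `lam`:
`g_{m,λ}(x) = Σ_{j=0}^∞ [e^{-λ/2} (λ/2)^j / j!] f_{m+2j}(x)`. -/
noncomputable def ncChisqPDF (m : ℕ) (lam x : ℝ) : ℝ :=
  ∑' j : ℕ, Real.exp (-lam / 2) * (lam / 2) ^ j / (Nat.factorial j : ℝ) *
    chisqPDF (m + 2 * j) x

/-- The noncentral chi-square distribution function
`G_{m,λ}(x) = ∫_0^x g_{m,λ}(u) du`. -/
noncomputable def ncChisqCDF (m : ℕ) (lam x : ℝ) : ℝ :=
  ∫ u in (0 : ℝ)..x, ncChisqPDF m lam u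

/-- The order-`n^{-1/2}` local power `1 - G_{1,λ}(x) - Σ_{k=0}^3 b_k G_{1+2k,λ}(x)`
of a test whose expansion coefficients are `b₀ = -(b₁+b₂+b₃), b₁, b₂, b₃`. -/
noncomputable def localPower (b1 b2 b3 lam x : ℝ) : ℝ :=
  1 - ncChisqCDF 1 lam x -
    (-(b1 + b2 + b3) * ncChisqCDF 1 lam x + b1 * ncChisqCDF 3 lam x +
      b2 * ncChisqCDF 5 lam x + b3 * ncChisqCDF 7 lam x)

/-- Local power `Π₁` of the likelihood ratio test of `H₀ : φ = φ₀` in a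
dispersion model, with `λ = -α₂ ε²`. -/
noncomputable def PiLR (α₂ α₂' α₃ ε φ : ℝ) (p : ℕ) (x : ℝ) : ℝ :=
  localPower ((α₂' - α₃) * ε ^ 3 / 2 + p * ε / (2 * φ))
    ((2 * α₃ - 3 * α₂') * ε ^ 3 / 6) 0 (-α₂ * ε ^ 2) x

/-- Local power `Π₂` of the Wald test of `H₀ : φ = φ₀` in a dispersion model. -/
noncomputable def PiWald (α₂ α₂' α₃ ε φ : ℝ) (p : ℕ) (x : ℝ) : ℝ :=
  localPower ((α₂' - α₃) * ε ^ 3 / 2 - α₃ * ε / (2 * α₂) + p * ε / (2 * φ))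
    (-((α₂' - α₃) * ε ^ 3) / 2 + α₃ * ε / (2 * α₂)) (-(α₃ * ε ^ 3) / 6)
    (-α₂ * ε ^ 2) x

/-- Local power `Π₃` of the score test of `H₀ : φ = φ₀` in a dispersion model. -/
noncomputable def PiScore (α₂ α₂' α₃ ε φ : ℝ) (p : ℕ) (x : ℝ) : ℝ :=
  localPower ((α₂' - α₃) * ε ^ 3 / 2 + (2 * α₃ - 3 * α₂') * ε / (2 * α₂) + p * ε / (2 * φ))
    (-((2 * α₃ - 3 * α₂') * ε) / (2 * α₂)) ((2 * α₃ - 3 * α₂') * ε ^ 3 / 6)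
    (-α₂ * ε ^ 2) x

/-- Local power `Π₄` of the gradient test of `H₀ : φ = φ₀` in a dispersion model. -/
noncomputable def PiGrad (α₂ α₂' α₃ ε φ : ℝ) (p : ℕ) (x : ℝ) : ℝ :=
  localPower ((α₂' - α₃) * ε ^ 3 / 2 + α₃ * ε / (4 * α₂) + p * ε / (2 * φ))
    (-((2 * α₂' - α₃) * ε ^ 3) / 4 - α₃ * ε / (4 * α₂)) (α₃ * ε ^ 3 / 12)
    (-α₂ * ε ^ 2) x

open MeasureTheory ProbabilityTheory

variable {m : ℕ} {lam x : ℝ}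

lemma chisqPDF_of_pos (m : ℕ) (hx : 0 < x) :
    chisqPDF m x = x ^ ((m : ℝ) / 2 - 1) * Real.exp (-x / 2) /
      (2 ^ ((m : ℝ) / 2) * Real.Gamma ((m : ℝ) / 2)) :=
  if_pos hx

lemma chisqPDF_of_nonpos (m : ℕ) (hx : x ≤ 0) : chisqPDF m x = 0 :=
  if_neg hx.not_gt

lemma chisqPDF_pos (hm : 0 < m) (hx : 0 < x) : 0 < chisqPDF m x := by
  rw [chisqPDF_of_pos m hx]
  positivity

lemma chisqPDF_nonneg (hm : 0 < m) (x : ℝ) : 0 ≤ chisqPDF m x := by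
  rcases lt_or_ge 0 x with hx | hx
  · exact (chisqPDF_pos hm hx).le
  · exact (chisqPDF_of_nonpos m hx).ge

/- The two densities differ at `0` when `m = 2`, where `gammaPDFReal` takes the value `1 / 2`. -/
lemma chisqPDF_ae_eq_gammaPDFReal (m : ℕ) :
    chisqPDF m =ᵐ[volume] gammaPDFReal ((m : ℝ) / 2) (1 / 2) := by
  filter_upwards [compl_mem_ae_iff.2 (measure_singleton (0 : ℝ))] with u hu
  rcases lt_or_gt_of_ne hu with hneg | hpos
  · simp [chisqPDF_of_nonpos m hneg.le, gammaPDFReal, hneg.not_ge]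
  · rw [chisqPDF_of_pos m hpos, gammaPDFReal, if_pos hpos.le,
      Real.div_rpow zero_le_one zero_le_two, Real.one_rpow,
      show -u / 2 = -(1 / 2 * u) by ring]
    ring

lemma integral_chisqPDF (hm : 0 < m) : ∫ u, chisqPDF m u = 1 := by
  have hm₂ : (0 : ℝ) < m / 2 := by positivity
  rw [integral_congr_ae (chisqPDF_ae_eq_gammaPDFReal m), integral_eq_lintegral_of_nonneg_ae
    (.of_forall (gammaPDFReal_nonneg hm₂ one_half_pos)) (by fun_prop)]
  exact (ENNReal.toReal_eq_one_iff _).2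
    (lintegral_gammaPDF_eq_one hm₂ one_half_pos)

lemma integrable_chisqPDF (hm : 0 < m) : Integrable (chisqPDF m) :=
  integrable_of_integral_eq_one (integral_chisqPDF hm)

lemma continuous_chisqPDF (hm : 2 < m) : Continuous (chisqPDF m) := by
  have hexp : 0 < (m : ℝ) / 2 - 1 := by
    have : (2 : ℝ) < m := by exact_mod_cast hm
    linarith
  have hmax : chisqPDF m = fun u => max u 0 ^ ((m : ℝ) / 2 - 1) * Real.exp (-u / 2) /
      (2 ^ ((m : ℝ) / 2) * Real.Gamma ((m : ℝ) / 2)) := by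
    funext u
    rcases lt_or_ge 0 u with hu | hu
    · rw [chisqPDF_of_pos m hu, max_eq_left hu.le]
    · simp [chisqPDF_of_nonpos m hu, max_eq_right hu, Real.zero_rpow hexp.ne']
  have hpow : Continuous fun u : ℝ => max u 0 ^ ((m : ℝ) / 2 - 1) :=
    (Real.continuous_rpow_const hexp.le).comp (by fun_prop)
  rw [hmax]
  fun_prop

lemma mul_chisqPDF_add_two (hm : 0 < m) (x : ℝ) :
    m * chisqPDF (m + 2) x = x * chisqPDF m x := by
  rcases lt_or_ge 0 x with hx | hx
  · have hm₂ : (0 : ℝ) < m / 2 := by positivity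
    have hcast : ((m + 2 : ℕ) : ℝ) / 2 = (m : ℝ) / 2 + 1 := by push_cast; ring
    rw [chisqPDF_of_pos _ hx, chisqPDF_of_pos _ hx, hcast, Real.Gamma_add_one hm₂.ne',
      Real.rpow_add_one two_ne_zero, add_sub_cancel_right, Real.rpow_sub_one hx.ne']
    field_simp
  · simp [chisqPDF_of_nonpos _ hx]

lemma hasDerivAt_chisqPDF (m : ℕ) (hx : 0 < x) :
    HasDerivAt (chisqPDF m) ((((m : ℝ) / 2 - 1) / x - 1 / 2) * chisqPDF m x) x := by
  have hpow : HasDerivAt (fun u : ℝ => u ^ ((m : ℝ) / 2 - 1))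
      (((m : ℝ) / 2 - 1) * x ^ ((m : ℝ) / 2 - 1 - 1)) x :=
    Real.hasDerivAt_rpow_const (Or.inl hx.ne')
  have hexp : HasDerivAt (fun u : ℝ => Real.exp (-u / 2)) (Real.exp (-x / 2) * (-1 / 2)) x :=
    ((hasDerivAt_id x).neg.div_const 2).exp
  have hformula : chisqPDF m =ᶠ[nhds x] fun u => u ^ ((m : ℝ) / 2 - 1) * Real.exp (-u / 2) /
      (2 ^ ((m : ℝ) / 2) * Real.Gamma ((m : ℝ) / 2)) := by
    filter_upwards [lt_mem_nhds hx] with u hu using chisqPDF_of_pos m hu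
  refine (((hpow.mul hexp).div_const _).congr_of_eventuallyEq hformula).congr_deriv ?_
  rw [chisqPDF_of_pos m hx, Real.rpow_sub_one hx.ne']
  ring

lemma hasDerivAt_two_mul_chisqPDF_add_two (hm : 0 < m) (hx : 0 < x) :
    HasDerivAt (fun u => 2 * chisqPDF (m + 2) u) (chisqPDF m x - chisqPDF (m + 2) x) x := by
  refine ((hasDerivAt_chisqPDF (m + 2) hx).const_mul 2).congr_deriv ?_
  have hrec := mul_chisqPDF_add_two hm x
  push_cast
  field_simp
  linear_combination hrec

/-- The (central) chi-square distribution function `F_m(x)`, as an integral from `0` in the same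
way as `ncChisqCDF`. -/
noncomputable def chisqCDF (m : ℕ) (x : ℝ) : ℝ :=
  ∫ u in (0 : ℝ)..x, chisqPDF m u

lemma chisqCDF_nonneg (hm : 0 < m) (hx : 0 ≤ x) : 0 ≤ chisqCDF m x :=
  intervalIntegral.integral_nonneg hx fun u _ => chisqPDF_nonneg hm u

lemma chisqCDF_le_one (hm : 0 < m) (hx : 0 ≤ x) : chisqCDF m x ≤ 1 := by
  rw [chisqCDF, intervalIntegral.integral_of_le hx, ← integral_chisqPDF hm]
  exact setIntegral_le_integral (integrable_chisqPDF hm) (.of_forall (chisqPDF_nonneg hm))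

lemma chisqCDF_sub_chisqCDF_add_two (hm : 0 < m) (hx : 0 ≤ x) :
    chisqCDF m x - chisqCDF (m + 2) x = 2 * chisqPDF (m + 2) x := by
  have hint : ∀ {k : ℕ}, 0 < k → IntervalIntegrable (chisqPDF k) volume 0 x :=
    fun hk => (integrable_chisqPDF hk).intervalIntegrable
  rw [chisqCDF, chisqCDF, ← intervalIntegral.integral_sub (hint hm) (hint (by lia)),
    intervalIntegral.integral_eq_sub_of_hasDerivAt_of_le hx
      ((continuous_chisqPDF (by lia)).const_mul 2).continuousOn
      (fun u hu => hasDerivAt_two_mul_chisqPDF_add_two hm hu.1)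
      ((hint hm).sub (hint (by lia))),
    chisqPDF_of_nonpos _ le_rfl]
  ring

lemma chisqPDF_add_two_le_half (hm : 0 < m) (x : ℝ) : chisqPDF (m + 2) x ≤ 1 / 2 := by
  rcases le_total 0 x with hx | hx
  · linarith [chisqCDF_sub_chisqCDF_add_two hm hx, chisqCDF_le_one hm hx,
      chisqCDF_nonneg (m := m + 2) (by lia) hx]
  · rw [chisqPDF_of_nonpos _ hx]
    norm_num

/-- The Poisson weight `e^{-λ/2} (λ/2)^j / j!` of the mixture defining the noncentral chi-square
distribution. -/
noncomputable def ncChisqWeight (lam : ℝ) (j : ℕ) : ℝ :=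
  Real.exp (-lam / 2) * (lam / 2) ^ j / (Nat.factorial j : ℝ)

lemma ncChisqPDF_eq_tsum (m : ℕ) (lam x : ℝ) :
    ncChisqPDF m lam x = ∑' j, ncChisqWeight lam j * chisqPDF (m + 2 * j) x :=
  rfl

lemma ncChisqWeight_nonneg (hlam : 0 ≤ lam) (j : ℕ) : 0 ≤ ncChisqWeight lam j := by
  rw [ncChisqWeight]
  positivity

lemma ncChisqWeight_zero_pos (lam : ℝ) : 0 < ncChisqWeight lam 0 := by
  simp [ncChisqWeight, Real.exp_pos]

lemma summable_ncChisqWeight (lam : ℝ) : Summable (ncChisqWeight lam) :=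
  ((Real.summable_pow_div_factorial (lam / 2)).mul_left (Real.exp (-lam / 2))).congr
    fun _ => (mul_div_assoc _ _ _).symm

lemma summable_ncChisqWeight_mul_chisqPDF (hm : 0 < m) (lam x : ℝ) :
    Summable fun j => ncChisqWeight lam j * chisqPDF (m + 2 * j) x := by
  refine (summable_nat_add_iff 1).1 (Summable.of_norm_bounded
    (((summable_nat_add_iff 1).2 (summable_ncChisqWeight lam).norm).mul_right (1 / 2)) fun j => ?_)
  rw [norm_mul, Real.norm_of_nonneg (chisqPDF_nonneg (by lia) x)]
  exact mul_le_mul_of_nonneg_left (chisqPDF_add_two_le_half (m := m + 2 * j) (by lia) x)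
    (norm_nonneg _)

lemma ncChisqPDF_pos (hm : 0 < m) (hlam : 0 ≤ lam) (hx : 0 < x) : 0 < ncChisqPDF m lam x := by
  rw [ncChisqPDF_eq_tsum]
  exact (summable_ncChisqWeight_mul_chisqPDF hm lam x).tsum_pos
    (fun j => mul_nonneg (ncChisqWeight_nonneg hlam j) (chisqPDF_nonneg (by lia) x))
    0 (mul_pos (ncChisqWeight_zero_pos lam) (chisqPDF_pos hm hx))

lemma hasSum_ncChisqCDF (hm : 0 < m) (lam : ℝ) (hx : 0 ≤ x) :
    HasSum (fun j => ncChisqWeight lam j * chisqCDF (m + 2 * j) x) (ncChisqCDF m lam x) := by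
  have hint : ∀ j, Integrable (fun u => ncChisqWeight lam j * chisqPDF (m + 2 * j) u)
      (volume.restrict (Set.Ioc 0 x)) :=
    fun j => ((integrable_chisqPDF (by lia)).const_mul _).restrict
  have hnorm : ∀ j, ∫ u in Set.Ioc 0 x, ‖ncChisqWeight lam j * chisqPDF (m + 2 * j) u‖ =
      ‖ncChisqWeight lam j‖ * chisqCDF (m + 2 * j) x := fun j => by
    simp only [norm_mul, Real.norm_of_nonneg (chisqPDF_nonneg (m := m + 2 * j) (by lia) _),
      integral_const_mul, chisqCDF, intervalIntegral.integral_of_le hx]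
  have hsum : Summable fun j =>
      ∫ u in Set.Ioc 0 x, ‖ncChisqWeight lam j * chisqPDF (m + 2 * j) u‖ := by
    simp only [hnorm]
    exact (summable_ncChisqWeight lam).norm.of_nonneg_of_le
      (fun j => mul_nonneg (norm_nonneg _) (chisqCDF_nonneg (by lia) hx))
      (fun j => mul_le_of_le_one_right (norm_nonneg _) (chisqCDF_le_one (by lia) hx))
  simp only [ncChisqCDF, ncChisqPDF_eq_tsum, chisqCDF, intervalIntegral.integral_of_le hx,
    ← integral_const_mul]
  exact hasSum_integral_of_summable_integral_norm hint hsum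

theorem ncChisqCDF_sub_ncChisqCDF_add_two (hm : 0 < m) (lam : ℝ) (hx : 0 ≤ x) :
    ncChisqCDF m lam x - ncChisqCDF (m + 2) lam x = 2 * ncChisqPDF (m + 2) lam x := by
  have hdiff : ∀ j, ncChisqWeight lam j * chisqCDF (m + 2 * j) x -
      ncChisqWeight lam j * chisqCDF (m + 2 + 2 * j) x =
      2 * (ncChisqWeight lam j * chisqPDF (m + 2 + 2 * j) x) := fun j => by
    rw [← mul_sub, add_right_comm, chisqCDF_sub_chisqCDF_add_two (by lia) hx, mul_left_comm]
  rw [ncChisqPDF_eq_tsum, ← tsum_mul_left, ← tsum_congr hdiff]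
  exact ((hasSum_ncChisqCDF hm lam hx).sub (hasSum_ncChisqCDF (by lia) lam hx)).tsum_eq.symm

theorem localPower_eq_ncChisqPDF (b₁ b₂ b₃ lam : ℝ) (hx : 0 ≤ x) :
    localPower b₁ b₂ b₃ lam x = 1 - ncChisqCDF 1 lam x +
      2 * ((b₁ + b₂ + b₃) * ncChisqPDF 3 lam x + (b₂ + b₃) * ncChisqPDF 5 lam x +
        b₃ * ncChisqPDF 7 lam x) := by
  have h₁₃ := ncChisqCDF_sub_ncChisqCDF_add_two (m := 1) (by norm_num) lam hx
  have h₃₅ := ncChisqCDF_sub_ncChisqCDF_add_two (m := 3) (by norm_num) lam hx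
  have h₅₇ := ncChisqCDF_sub_ncChisqCDF_add_two (m := 5) (by norm_num) lam hx
  rw [localPower]
  linear_combination (b₁ + b₂ + b₃) * h₁₃ + (b₂ + b₃) * h₃₅ + b₃ * h₅₇

/-- The quantity `ε² g_{7,λ}(x) / 3 - g_{5,λ}(x) / α₂` at `λ = -α₂ ε²`, of which the differences
between the local powers of the four tests are multiples. -/
noncomputable def localPowerGap (α₂ ε x : ℝ) : ℝ :=
  ε ^ 2 / 3 * ncChisqPDF 7 (-α₂ * ε ^ 2) x - ncChisqPDF 5 (-α₂ * ε ^ 2) x / α₂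

lemma localPowerGap_pos {α₂ : ℝ} (hα₂ : α₂ < 0) (ε : ℝ) (hx : 0 < x) :
    0 < localPowerGap α₂ ε x := by
  have hlam : 0 ≤ -α₂ * ε ^ 2 := mul_nonneg (neg_nonneg.2 hα₂.le) (sq_nonneg ε)
  have h₅ : ncChisqPDF 5 (-α₂ * ε ^ 2) x / α₂ < 0 :=
    div_neg_of_pos_of_neg (ncChisqPDF_pos (by norm_num) hlam hx) hα₂
  have h₇ : 0 < ncChisqPDF 7 (-α₂ * ε ^ 2) x := ncChisqPDF_pos (by norm_num) hlam hx
  rw [localPowerGap]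
  linarith [show 0 ≤ ε ^ 2 / 3 * ncChisqPDF 7 (-α₂ * ε ^ 2) x by positivity]

lemma PiLR_sub_PiWald (α₂ α₂' α₃ ε φ : ℝ) (p : ℕ) (hx : 0 ≤ x) :
    PiLR α₂ α₂' α₃ ε φ p x - PiWald α₂ α₂' α₃ ε φ p x = α₃ * ε * localPowerGap α₂ ε x := by
  rw [PiLR, PiWald, localPowerGap, localPower_eq_ncChisqPDF _ _ _ _ hx,
    localPower_eq_ncChisqPDF _ _ _ _ hx]
  ring

lemma PiLR_sub_PiScore (α₂ α₂' α₃ ε φ : ℝ) (p : ℕ) (hx : 0 ≤ x) :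
    PiLR α₂ α₂' α₃ ε φ p x - PiScore α₂ α₂' α₃ ε φ p x =
      (3 * α₂' - 2 * α₃) * ε * localPowerGap α₂ ε x := by
  rw [PiLR, PiScore, localPowerGap, localPower_eq_ncChisqPDF _ _ _ _ hx,
    localPower_eq_ncChisqPDF _ _ _ _ hx]
  ring

lemma PiGrad_sub_PiLR (α₂ α₂' α₃ ε φ : ℝ) (p : ℕ) (hx : 0 ≤ x) :
    PiGrad α₂ α₂' α₃ ε φ p x - PiLR α₂ α₂' α₃ ε φ p x =
      α₃ * ε / 2 * localPowerGap α₂ ε x := by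
  rw [PiGrad, PiLR, localPowerGap, localPower_eq_ncChisqPDF _ _ _ _ hx,
    localPower_eq_ncChisqPDF _ _ _ _ hx]
  ring

/-- **Ordering of local powers when `α₂′ = α₃ > 0`.**
If `α₂ < 0` and `α₂′ = α₃ > 0`, then for every `x > 0` the local powers
satisfy `Π₂ = Π₃ < Π₁ < Π₄` when `ε > 0`, and `Π₂ = Π₃ > Π₁ > Π₄`
when `ε < 0`. -/
theorem precision_local_power_ordering_of_eq (α₂ α₂' α₃ ε φ : ℝ) (hα₂ : α₂ < 0)
    (heq : α₂' = α₃) (hα₃ : 0 < α₃) (hφ : 0 < φ) (p : ℕ) (hp : 1 ≤ p)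
    (x : ℝ) (hx : 0 < x) :
    (0 < ε →
      PiWald α₂ α₂' α₃ ε φ p x = PiScore α₂ α₂' α₃ ε φ p x ∧
      PiScore α₂ α₂' α₃ ε φ p x < PiLR α₂ α₂' α₃ ε φ p x ∧
      PiLR α₂ α₂' α₃ ε φ p x < PiGrad α₂ α₂' α₃ ε φ p x) ∧
    (ε < 0 →
      PiWald α₂ α₂' α₃ ε φ p x = PiScore α₂ α₂' α₃ ε φ p x ∧
      PiGrad α₂ α₂' α₃ ε φ p x < PiLR α₂ α₂' α₃ ε φ p x ∧
      PiLR α₂ α₂' α₃ ε φ p x < PiScore α₂ α₂' α₃ ε φ p x) := by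
  subst heq
  have hWald := PiLR_sub_PiWald α₂ α₂' α₂' ε φ p hx.le
  have hScore := PiLR_sub_PiScore α₂ α₂' α₂' ε φ p hx.le
  have hGrad := PiGrad_sub_PiLR α₂ α₂' α₂' ε φ p hx.le
  have hgap := localPowerGap_pos hα₂ ε hx
  refine ⟨fun hε => ?_, fun hε => ?_⟩
  · have hmul : 0 < α₂' * ε * localPowerGap α₂ ε x := by positivity
    exact ⟨by linarith, by linarith, by linarith⟩
  · have hmul : α₂' * ε * localPowerGap α₂ ε x < 0 :=
      mul_neg_of_neg_of_pos (mul_neg_of_pos_of_neg hα₃ hε) hgap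
    exact ⟨by linarith, by linarith, by linarith⟩
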